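/- For every natural number n ≥ 30 with n ∉ {35, 36, 37, 53}, the open interval (8n/9, n) contains a prime number. -/

import Mathlib

open Real Finset ArithmeticFunction

namespace EightNinths

/-- Positive part of the Chebyshev-type weight: pairs `(j, coefficient)`. -/
def posL : List (ℕ × ℕ) :=
  [(8, 1), (18, 1), (27, 1), (45, 1), (48, 1), (63, 1), (80, 1), (112, 1), (120, 2), (168, 3),
   (252, 1), (270, 3), (280, 2), (378, 1), (420, 3), (630, 2), (720, 3), (945, 6), (1008, 1),
   (1080, 1), (1680, 7), (2520, 2), (3780, 1), (5040, 2), (7560, 2), (15120, 7)]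

/-- Negative part of the Chebyshev-type weight. -/
def negL : List (ℕ × ℕ) :=
  [(9, 1), (16, 1), (24, 1), (40, 1), (54, 1), (56, 1), (84, 1), (90, 1), (126, 1), (135, 2),
   (144, 1), (189, 1), (240, 3), (315, 2), (336, 2), (360, 1), (504, 1), (540, 1), (560, 2),
   (840, 8), (1260, 4), (1890, 6), (2160, 2)]

/-- `∑ c * ⌊N / j⌋`. -/
def S : List (ℕ × ℕ) → ℕ → ℕ
  | [], _ => 0
  | x :: l, N => x.2 * (N / x.1) + S l N

/-- `∏ j ^ (c * (15120 / j))`. -/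
def Pr : List (ℕ × ℕ) → ℕ
  | [] => 1
  | x :: l => x.1 ^ (x.2 * (15120 / x.1)) * Pr l

/-- Sum of the coefficients. -/
def Cf : List (ℕ × ℕ) → ℕ
  | [] => 0
  | x :: l => x.2 + Cf l

/-- Weighted real sum. -/
noncomputable def W : List (ℕ × ℕ) → (ℕ → ℝ) → ℝ
  | [], _ => 0
  | x :: l, f => x.2 * f x.1 + W l f

/-- Explicit form of `S posL`. -/
def gp (N : ℕ) : ℕ :=
    N / 8 + N / 18 + N / 27 + N / 45 + N / 48 + N / 63 + N / 80 + N / 112 + 2 * (N / 120) +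
    3 * (N / 168) + N / 252 + 3 * (N / 270) + 2 * (N / 280) + N / 378 + 3 * (N / 420) +
    2 * (N / 630) + 3 * (N / 720) + 6 * (N / 945) + N / 1008 + N / 1080 + 7 * (N / 1680) +
    2 * (N / 2520) + N / 3780 + 2 * (N / 5040) + 2 * (N / 7560) + 7 * (N / 15120)

/-- Explicit form of `S negL`. -/
def gn (N : ℕ) : ℕ :=
    N / 9 + N / 16 + N / 24 + N / 40 + N / 54 + N / 56 + N / 84 + N / 90 + N / 126 +
    2 * (N / 135) + N / 144 + N / 189 + 3 * (N / 240) + 2 * (N / 315) + 2 * (N / 336) +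
    N / 360 + N / 504 + N / 540 + 2 * (N / 560) + 8 * (N / 840) + 4 * (N / 1260) +
    6 * (N / 1890) + 2 * (N / 2160)

lemma gp_eq (N : ℕ) : S posL N = gp N := by
  simp only [S, posL, gp]; ring

lemma gn_eq (N : ℕ) : S negL N = gn N := by
  simp only [S, negL, gn]; ring

/-- The test at a single argument. -/
def tst (N : ℕ) : Bool := Nat.ble (gp N) (gn N) || (Nat.beq N 8 || Nat.ble 15120 N)

/-- Evaluate the argument to a numeral before using it. -/
def force (f : ℕ → Bool) (a : ℕ) : Bool := Nat.rec (f 0) (fun m _ => f (Nat.succ m)) a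

lemma force_eq (f : ℕ → Bool) (a : ℕ) : force f a = f a := by
  cases a <;> rfl

/-- The test on `[a, a + 2 ^ k)`. -/
def chk : ℕ → ℕ → Bool
  | 0, a => force tst a
  | k + 1, a => chk k a && chk k (a + 2 ^ k)

lemma chk_spec (k : ℕ) : ∀ a, chk k a = true → ∀ N, a ≤ N → N < a + 2 ^ k → tst N = true := by
  induction k with
  | zero =>
    intro a h N h1 h2
    have : N = a := by simp at h2; omega
    subst this
    rw [← force_eq tst N]; exact h
  | succ k ih =>
    intro a h N h1 h2
    simp only [chk, Bool.and_eq_true] at h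
    rw [pow_succ] at h2
    rcases lt_or_ge N (a + 2 ^ k) with h3 | h3
    · exact ih _ h.1 N h1 h3
    · exact ih _ h.2 N h3 (by omega)

lemma chk_all : chk 14 0 = true := by decide +kernel

lemma S_eight : S posL 8 = 1 ∧ S negL 8 = 0 := by decide +kernel

lemma S_base (N : ℕ) (h : N < 15120) : S posL N ≤ S negL N + if N = 8 then 1 else 0 := by
  have := chk_spec 14 0 chk_all N (Nat.zero_le _) (by norm_num; omega)
  simp only [tst, Bool.or_eq_true, Nat.ble_eq] at this
  rw [gp_eq, gn_eq]
  rcases this with h1 | h1 | h1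
  · omega
  · have h8 : N = 8 := Nat.eq_of_beq_eq_true h1
    subst h8
    rw [← gp_eq, ← gn_eq]
    simp [S_eight]
  · omega

lemma S_period (l : List (ℕ × ℕ)) (hl : ∀ x ∈ l, x.1 ∣ 15120) (N q : ℕ) :
    S l (N + 15120 * q) = S l N + S l 15120 * q := by
  induction l with
  | nil => simp [S]
  | cons x l ih =>
    have h1 := ih (fun y hy => hl y (List.mem_cons_of_mem _ hy))
    obtain ⟨e, he⟩ := hl x List.mem_cons_self
    have hx : 0 < x.1 := by
      rcases Nat.eq_zero_or_pos x.1 with h | h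
      · rw [h] at he; omega
      · exact h
    simp only [S, h1]
    rw [he, mul_assoc, Nat.add_mul_div_left _ _ hx, Nat.mul_div_cancel_left _ hx]
    ring

lemma pos_dvd : ∀ x ∈ posL, x.1 ∣ 15120 := by decide +kernel
lemma neg_dvd : ∀ x ∈ negL, x.1 ∣ 15120 := by decide +kernel
lemma pos_ge : ∀ x ∈ posL, 8 ≤ x.1 := by decide +kernel
lemma neg_ge : ∀ x ∈ negL, 8 ≤ x.1 := by decide +kernel
lemma S_tot : S posL 15120 = S negL 15120 := by decide +kernel
lemma Cf_pos : Cf posL + Cf negL = 102 := by decide +kernel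
lemma Pr_le : 2 ^ 110 * Pr posL ≤ Pr negL := by decide +kernel

lemma S_main (N : ℕ) :
    S posL N ≤ S negL N + ((if N = 8 then 1 else 0) + if 15120 ≤ N then 1 else 0) := by
  rcases lt_or_ge N 15120 with h | h
  · have := S_base N h
    omega
  · have h0 := Nat.mod_add_div N 15120
    have hp := S_period posL pos_dvd (N % 15120) (N / 15120)
    have hn := S_period negL neg_dvd (N % 15120) (N / 15120)
    rw [h0] at hp hn
    have hb := S_base (N % 15120) (Nat.mod_lt _ (by norm_num))
    rw [hp, hn, S_tot, if_pos h]
    split_ifs at hb <;> omega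

lemma log_fact (N : ℕ) : Real.log (N.factorial : ℝ) = ∑ m ∈ Ioc 0 N, Real.log (m : ℝ) := by
  induction N with
  | zero => simp
  | succ k ih =>
    rw [Finset.sum_Ioc_succ_top (Nat.zero_le k), ← ih, Nat.factorial_succ]
    push_cast
    rw [Real.log_mul (by positivity) (by positivity)]
    ring

lemma log_fact_vm (N : ℕ) : Real.log (N.factorial : ℝ) = ∑ d ∈ Ioc 0 N, Λ d * ((N / d : ℕ) : ℝ) := by
  rw [log_fact, ← sum_Ioc_mul_zeta_eq_sum, vonMangoldt_mul_zeta]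
  rfl

lemma log_fact_div (X j : ℕ) : Real.log ((X / j).factorial : ℝ) =
    ∑ d ∈ Ioc 0 X, Λ d * ((X / d / j : ℕ) : ℝ) := by
  rw [log_fact_vm]
  have hsub : Ioc 0 (X / j) ⊆ Ioc 0 X := Ioc_subset_Ioc_right (Nat.div_le_self _ _)
  rw [← Finset.sum_subset hsub]
  · refine Finset.sum_congr rfl fun d _ => ?_
    rw [Nat.div_div_eq_div_mul, Nat.div_div_eq_div_mul, mul_comm j d]
  · intro d hd hd'
    simp only [Finset.mem_Ioc] at hd hd'
    have : X / d / j = 0 := by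
      rw [Nat.div_div_eq_div_mul, mul_comm, ← Nat.div_div_eq_div_mul]
      exact Nat.div_eq_of_lt (by omega)
    simp [this]

lemma W_log_fact (l : List (ℕ × ℕ)) (X : ℕ) : W l (fun j => Real.log ((X / j).factorial : ℝ)) =
    ∑ d ∈ Ioc 0 X, Λ d * (S l (X / d) : ℝ) := by
  induction l with
  | nil => simp [W, S]
  | cons x l ih =>
    simp only [W, S, ih]
    rw [log_fact_div, Finset.mul_sum, ← Finset.sum_add_distrib]
    refine Finset.sum_congr rfl fun d _ => ?_
    push_cast
    ring

lemma W_upper (X : ℕ) : W posL (fun j => Real.log ((X / j).factorial : ℝ)) ≤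
    W negL (fun j => Real.log ((X / j).factorial : ℝ)) +
      ((∑ d ∈ Ioc 0 X with X / d = 8, Λ d) + ∑ d ∈ Ioc 0 X with 15120 ≤ X / d, Λ d) := by
  rw [W_log_fact, W_log_fact, Finset.sum_filter, Finset.sum_filter, ← Finset.sum_add_distrib,
    ← Finset.sum_add_distrib]
  refine Finset.sum_le_sum fun d _ => ?_
  have h := S_main (X / d)
  have h' : (S posL (X / d) : ℝ) ≤ S negL (X / d) +
      ((if X / d = 8 then 1 else 0) + if 15120 ≤ X / d then 1 else 0) := by exact_mod_cast h
  have := mul_le_mul_of_nonneg_left h' (vonMangoldt_nonneg (n := d))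
  refine this.trans (le_of_eq ?_)
  split_ifs <;> ring

/-- The tail is small. -/
lemma tail_le (n : ℕ) : ∑ d ∈ Ioc 0 (8 * n) with 15120 ≤ 8 * n / d, Λ d ≤
    (Real.log 4 + 4) * (n / 1890) := by
  refine le_trans ?_ (Chebyshev.psi_le_const_mul_self (x := (n : ℝ) / 1890) (by positivity))
  rw [Chebyshev.psi]
  refine Finset.sum_le_sum_of_subset_of_nonneg ?_ fun _ _ _ => vonMangoldt_nonneg
  intro d hd
  simp only [Finset.mem_filter, Finset.mem_Ioc] at hd ⊢
  obtain ⟨⟨h1, h2⟩, h3⟩ := hd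
  refine ⟨h1, Nat.le_floor ?_⟩
  rw [Nat.le_div_iff_mul_le h1] at h3
  rw [le_div_iff₀ (by norm_num)]
  exact_mod_cast (by omega : d * 1890 ≤ n)

/-- The main sum is small if there are no primes. -/
lemma main_le (n : ℕ) (hn : 1 ≤ n) (hno : ∀ p : ℕ, p.Prime → 8 * n < 9 * p → ¬ p < n) :
    ∑ d ∈ Ioc 0 (8 * n) with 8 * n / d = 8, Λ d ≤ 2 * √(n : ℝ) * Real.log n + Real.log n := by
  have h1 := Chebyshev.psi_sub_theta_le (x := (n : ℝ)) (by exact_mod_cast hn)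
  rw [Chebyshev.psi_sub_theta_eq_sum_not_prime, Nat.floor_natCast] at h1
  have h2 : Λ n ≤ Real.log n := vonMangoldt_le_log
  have h3 : ∑ d ∈ Ioc 0 (8 * n) with 8 * n / d = 8, Λ d ≤
      ∑ d ∈ insert n ((Ioc 0 n).filter fun d => ¬ d.Prime), Λ d := by
    refine Finset.sum_le_sum_of_subset_of_nonneg ?_ fun _ _ _ => vonMangoldt_nonneg
    intro d hd
    simp only [Finset.mem_filter, Finset.mem_Ioc, Finset.mem_insert] at hd ⊢
    obtain ⟨⟨h1, h2⟩, h3⟩ := hd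
    have h4 : 8 * d ≤ 8 * n := by
      rw [← Nat.le_div_iff_mul_le h1]; exact h3.ge
    have h5 : 8 * n < 9 * d := by
      rw [← Nat.div_lt_iff_lt_mul h1]; omega
    by_cases hdn : d = n
    · exact Or.inl hdn
    · exact Or.inr ⟨⟨h1, by omega⟩, fun hp => hno d hp h5 (by omega)⟩
  have h4 : ∑ d ∈ insert n ((Ioc 0 n).filter fun d => ¬ d.Prime), Λ d ≤
      Λ n + ∑ d ∈ Ioc 0 n with ¬ d.Prime, Λ d := by
    by_cases hm : n ∈ (Ioc 0 n).filter fun d => ¬ d.Prime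
    · rw [Finset.insert_eq_of_mem hm]
      linarith [vonMangoldt_nonneg (n := n)]
    · rw [Finset.sum_insert hm]
  linarith

/-- Crude Stirling, lower bound. -/
lemma fact_lower (m : ℕ) (hm : 1 ≤ m) : (m : ℝ) * Real.log m - m ≤ Real.log (m.factorial : ℝ) := by
  induction m, hm using Nat.le_induction with
  | base => simp
  | succ k hk ih =>
    have hk0 : (0 : ℝ) < k := by exact_mod_cast hk
    rw [Nat.factorial_succ]
    push_cast
    rw [Real.log_mul (by positivity) (by positivity)]
    have h : Real.log ((k + 1 : ℝ) / k) ≤ (k + 1 : ℝ) / k - 1 := Real.log_le_sub_one_of_pos (by positivity)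
    rw [Real.log_div (by positivity) (by positivity)] at h
    have h2 : (k : ℝ) * (Real.log (k + 1) - Real.log k) ≤ k * ((k + 1 : ℝ) / k - 1) :=
      mul_le_mul_of_nonneg_left h hk0.le
    have h3 : (k : ℝ) * ((k + 1 : ℝ) / k - 1) = 1 := by field_simp; ring
    nlinarith

/-- Crude Stirling, upper bound. -/
lemma fact_upper (m : ℕ) (hm : 1 ≤ m) :
    Real.log (m.factorial : ℝ) ≤ (m : ℝ) * Real.log m - m + Real.log m + 1 := by
  induction m, hm using Nat.le_induction with
  | base => simp
  | succ k hk ih =>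
    have hk0 : (0 : ℝ) < k := by exact_mod_cast hk
    rw [Nat.factorial_succ]
    push_cast
    rw [Real.log_mul (by positivity) (by positivity)]
    have h : Real.log ((k : ℝ) / (k + 1)) ≤ (k : ℝ) / (k + 1) - 1 :=
      Real.log_le_sub_one_of_pos (by positivity)
    rw [Real.log_div (by positivity) (by positivity)] at h
    have h2 : (k + 1 : ℝ) * (Real.log k - Real.log (k + 1)) ≤ (k + 1) * ((k : ℝ) / (k + 1) - 1) :=
      mul_le_mul_of_nonneg_left h (by positivity)
    have h3 : (k + 1 : ℝ) * ((k : ℝ) / (k + 1) - 1) = -1 := by field_simp; ring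
    nlinarith

/-- `y log y - y` is monotone on `[1, ∞)`. -/
lemma f_mono {a b : ℝ} (ha : 1 ≤ a) (hab : a ≤ b) : a * Real.log a - a ≤ b * Real.log b - b := by
  have hb : 0 < b := by linarith
  have h2 : Real.log (b / a) ≥ 1 - (b / a)⁻¹ := Real.one_sub_inv_le_log_of_pos (by positivity)
  rw [Real.log_div (by positivity) (by positivity), inv_div] at h2
  have h3 : b * (Real.log b - Real.log a) ≥ b * (1 - a / b) := mul_le_mul_of_nonneg_left h2 hb.le
  have h4 : b * (1 - a / b) = b - a := by field_simp
  have h5 : 0 ≤ Real.log a := Real.log_nonneg ha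
  nlinarith [mul_nonneg (sub_nonneg.2 hab) h5]

lemma fact_approx (X j : ℕ) (hj : 1 ≤ j) (hX : j ≤ X) :
    |Real.log ((X / j).factorial : ℝ) - ((X / j : ℝ) * Real.log (X / j : ℝ) - X / j)| ≤
      Real.log ((X : ℝ) / j + 1) + 1 := by
  have hj0 : (0 : ℝ) < j := by exact_mod_cast hj
  have hm : 1 ≤ X / j := (Nat.one_le_div_iff hj).2 hX
  set m := X / j with hmdef
  have h1 : (m : ℝ) ≤ X / j := Nat.cast_div_le
  have h2 : (X : ℝ) / j ≤ m + 1 := by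
    rw [div_le_iff₀ hj0]
    have := Nat.lt_div_mul_add (a := X) hj
    rw [← hmdef] at this
    have h' : X ≤ (m + 1) * j := by nlinarith
    exact_mod_cast h'
  have hm1 : (1 : ℝ) ≤ m := by exact_mod_cast hm
  set y : ℝ := X / j with hy
  have hlow := fact_lower (m + 1) (by omega)
  have hup := fact_upper m hm
  rw [Nat.factorial_succ] at hlow
  push_cast at hlow
  rw [Real.log_mul (by positivity) (by positivity)] at hlow
  have f1 := f_mono hm1 h1
  have f2 := f_mono (hm1.trans h1) h2
  have l1 : Real.log m ≤ Real.log (y + 1) := Real.log_le_log (by positivity) (by linarith)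
  have l2 : Real.log ((m : ℝ) + 1) ≤ Real.log (y + 1) := Real.log_le_log (by positivity) (by linarith)
  rw [abs_le]
  constructor <;> linarith

lemma W_approx (l : List (ℕ × ℕ)) (hl : ∀ x ∈ l, 8 ≤ x.1) (hd : ∀ x ∈ l, x.1 ∣ 15120)
    (n : ℕ) (hn : 15120 ≤ n) :
    |W l (fun j => Real.log ((8 * n / j).factorial : ℝ)) -
      W l (fun j => ((8 * n : ℕ) / j : ℝ) * Real.log ((8 * n : ℕ) / j : ℝ) - (8 * n : ℕ) / j)| ≤
      Cf l * (Real.log ((n : ℝ) + 1) + 1) := by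
  induction l with
  | nil => simp [W, Cf]
  | cons x l ih =>
    have h1 := ih (fun y hy => hl y (List.mem_cons_of_mem _ hy))
      (fun y hy => hd y (List.mem_cons_of_mem _ hy))
    have hx8 := hl x List.mem_cons_self
    have hxd := Nat.le_of_dvd (by norm_num) (hd x List.mem_cons_self)
    have h2 := fact_approx (8 * n) x.1 (by omega) (by omega)
    have h3 : Real.log (((8 * n : ℕ) : ℝ) / x.1 + 1) ≤ Real.log ((n : ℝ) + 1) := by
      refine Real.log_le_log (by positivity) ?_
      have : ((8 * n : ℕ) : ℝ) / x.1 ≤ n := by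
        rw [div_le_iff₀ (by exact_mod_cast (by omega : 0 < x.1))]
        exact_mod_cast (by nlinarith : 8 * n ≤ n * x.1)
      linarith
    have h4 := mul_le_mul_of_nonneg_left (h2.trans (add_le_add_left h3 1))
      (Nat.cast_nonneg (α := ℝ) x.2)
    rw [abs_le] at h1
    rw [← abs_of_nonneg (Nat.cast_nonneg (α := ℝ) x.2), ← abs_mul, abs_le,
      abs_of_nonneg (Nat.cast_nonneg (α := ℝ) x.2)] at h4
    simp only [W, Cf]
    push_cast at h1 h4 ⊢
    rw [abs_le]
    constructor <;> nlinarith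

lemma W_main (l : List (ℕ × ℕ)) (hd : ∀ x ∈ l, x.1 ∣ 15120) (X : ℕ) (hX : 1 ≤ X) :
    W l (fun j => (X / j : ℝ) * Real.log (X / j : ℝ) - X / j) =
      X / 15120 * ((Real.log X - 1) * S l 15120 - Real.log (Pr l)) ∧ 0 < Pr l := by
  induction l with
  | nil => simp [W, S, Pr]
  | cons x l ih =>
    obtain ⟨h1, h2⟩ := ih (fun y hy => hd y (List.mem_cons_of_mem _ hy))
    have hxd := hd x List.mem_cons_self
    have hx : 0 < x.1 := Nat.pos_of_dvd_of_pos hxd (by norm_num)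
    obtain ⟨e, he⟩ := hxd
    have he' : (15120 : ℝ) = x.1 * e := by exact_mod_cast he
    have hq : 15120 / x.1 = e := by rw [he, Nat.mul_div_cancel_left _ hx]
    have hx' : (0 : ℝ) < x.1 := by exact_mod_cast hx
    have hX' : (0 : ℝ) < X := by exact_mod_cast hX
    have he0 : (0 : ℝ) < e := by
      have : 0 < e := Nat.pos_of_ne_zero (by rintro rfl; omega)
      exact_mod_cast this
    refine ⟨?_, by simp only [Pr]; positivity⟩
    simp only [W, S, Pr, h1, hq]
    push_cast
    rw [Real.log_mul (by positivity) (by positivity), Real.log_pow,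
      Real.log_div (by positivity) (by positivity), he']
    push_cast
    field_simp
    ring

lemma log_pr (u v : ℕ) (hu : 0 < u) (h : 2 ^ 110 * u ≤ v) :
    110 * Real.log 2 + Real.log (u : ℝ) ≤ Real.log (v : ℝ) := by
  have h' : ((2 : ℝ) ^ 110 * u) ≤ v := by exact_mod_cast h
  have hp' : (0 : ℝ) < u := by exact_mod_cast hu
  have := Real.log_le_log (by positivity) h'
  rw [Real.log_mul (by positivity) (by positivity), Real.log_pow] at this
  exact_mod_cast this

lemma final_num (r t c : ℝ) (hr0 : 2048 ≤ r) (hc : 0.6931 ≤ c) (ht : t ≤ 6.7 + r / 2048)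
    (key : r * r / 1890 * (110 * c) ≤
      2 * r * (2 * t) + 2 * t + (2 * c + 4) * (r * r / 1890) + 102 * (2 * t + 2)) : False := by
  have h5 : r * t ≤ r * (6.7 + r / 2048) := mul_le_mul_of_nonneg_left ht (by linarith)
  have h6 : r * r * 0.6931 ≤ r * r * c := mul_le_mul_of_nonneg_left hc (by positivity)
  have h7 : 2048 * r ≤ r * r := mul_le_mul_of_nonneg_right hr0 (by linarith)
  linarith

lemma large (n : ℕ) (hn : 2 ^ 22 ≤ n) : ∃ p : ℕ, p.Prime ∧ 8 * n < 9 * p ∧ p < n := by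
  by_contra hcon
  push Not at hcon
  have hno : ∀ p : ℕ, p.Prime → 8 * n < 9 * p → ¬ p < n :=
    fun p h1 h2 => not_lt.2 (hcon p h1 h2)
  have hn1 : 15120 ≤ n := by omega
  have hm := main_le n (by omega) hno
  have ht := tail_le n
  have hu := W_upper (8 * n)
  have ap := (abs_le.1 (W_approx posL pos_ge pos_dvd n hn1)).1
  have an := (abs_le.1 (W_approx negL neg_ge neg_dvd n hn1)).2
  obtain ⟨mp, pp⟩ := W_main posL pos_dvd (8 * n) (by omega)
  obtain ⟨mn, pn⟩ := W_main negL neg_dvd (8 * n) (by omega)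
  rw [mp] at ap
  rw [mn] at an
  rw [S_tot] at ap
  have hC : (Cf posL : ℝ) + Cf negL = 102 := by exact_mod_cast Cf_pos
  have hP : 110 * Real.log 2 + Real.log (Pr posL) ≤ Real.log (Pr negL) :=
    log_pr _ _ pp Pr_le
  generalize (S negL 15120 : ℝ) = s at *
  generalize Real.log (Pr posL : ℝ) = a at *
  generalize Real.log (Pr negL : ℝ) = b at *
  generalize W posL _ = w1 at *
  generalize W negL _ = w2 at *
  have hnR : (2 : ℝ) ^ 22 ≤ n := by exact_mod_cast hn
  have hn0 : (0 : ℝ) < n := by linarith [show (0 : ℝ) < 2 ^ 22 by norm_num]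
  set r := √(n : ℝ) with hr
  have hrr : r * r = n := Real.mul_self_sqrt hn0.le
  have hr0 : 2048 ≤ r := by
    rw [hr]
    exact Real.le_sqrt_of_sq_le (by norm_num at hnR ⊢; exact hnR)
  have l2a := Real.log_two_gt_d9
  have l2b := Real.log_two_lt_d9
  have hlogr : Real.log r ≤ 11 * Real.log 2 + r / 2048 - 1 := by
    have h := Real.log_le_sub_one_of_pos (show 0 < r / 2048 by linarith)
    rw [Real.log_div (by linarith) (by norm_num), show (2048 : ℝ) = 2 ^ 11 by norm_num,
      Real.log_pow] at h
    push_cast at h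
    norm_num at h ⊢
    linarith
  have hlogn : Real.log n = 2 * Real.log r := by
    rw [← hrr, Real.log_mul (by linarith) (by linarith)]; ring
  have hlogn1 : Real.log ((n : ℝ) + 1) ≤ Real.log n + 1 := by
    have h := Real.log_le_sub_one_of_pos (show 0 < ((n : ℝ) + 1) / n by positivity)
    rw [Real.log_div (by positivity) (by positivity)] at h
    have : ((n : ℝ) + 1) / n ≤ 2 := by
      rw [div_le_iff₀ hn0]; linarith [show (1 : ℝ) ≤ 2 ^ 22 by norm_num]
    linarith
  have hlog4 : Real.log 4 = 2 * Real.log 2 := by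
    rw [show (4 : ℝ) = 2 ^ 2 by norm_num, Real.log_pow]; norm_num
  rw [hlog4] at ht
  have key : (n : ℝ) / 1890 * (110 * Real.log 2) ≤
      2 * r * Real.log n + Real.log n + (2 * Real.log 2 + 4) * (n / 1890) + 102 * (Real.log n + 2) := by
    have e1 : ((8 * n : ℕ) : ℝ) / 15120 = n / 1890 := by push_cast; ring
    rw [e1] at ap an
    have e2 : (Cf posL : ℝ) * (Real.log ((n : ℝ) + 1) + 1) + Cf negL * (Real.log ((n : ℝ) + 1) + 1) =
        102 * (Real.log ((n : ℝ) + 1) + 1) := by rw [← hC]; ring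
    have e3 : (n : ℝ) / 1890 * (110 * Real.log 2) ≤ n / 1890 * (b - a) :=
      mul_le_mul_of_nonneg_left (by linarith) (by positivity)
    have e4 : (n : ℝ) / 1890 * ((Real.log ((8 * n : ℕ) : ℝ) - 1) * s - a) -
        n / 1890 * ((Real.log ((8 * n : ℕ) : ℝ) - 1) * s - b) = n / 1890 * (b - a) := by ring
    linarith
  rw [hlogn, ← hrr] at key
  exact final_num r _ _ hr0 (by linarith) (by linarith) key

/-- A chain of primes with ratios below `9 / 8`. -/
def chain : List ℕ :=
  [59, 61, 67, 73, 79, 83, 89, 97, 109, 113, 127, 139, 151, 167, 181, 199, 223, 241, 271, 293,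
   317, 353, 397, 443, 491, 547, 613, 683, 761, 853, 953, 1069, 1201, 1327, 1489, 1669, 1877,
   2111, 2371, 2663, 2971, 3331, 3739, 4201, 4723, 5309, 5953, 6691, 7523, 8461, 9511, 10691,
   12011, 13499, 15173, 17053, 19183, 21577, 24251, 27281, 30689, 34519, 38833, 43669, 49123,
   55259, 62143, 69899, 78623, 88427, 99469, 111893, 125863, 141587, 159233, 179119, 201499,
   226669, 254993, 286859, 322709, 363047, 408427, 459479, 516911, 581521, 654209, 735983, 827969,
   931421, 1047841, 1178809, 1326151, 1491913, 1678399, 1888193, 2124197, 2389721, 2688421,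
   3024457, 3402473, 3827767]

set_option maxRecDepth 100000 in
lemma chain_prime : ∀ p ∈ chain, p.Prime := by
  simp only [chain, List.forall_mem_cons]
  norm_num

/-- Consecutive entries are close and the last one reaches `B`. -/
def ok (B : ℕ) : List ℕ → Bool
  | [] => false
  | [a] => decide (8 * B < 9 * a)
  | a :: b :: t => decide (8 * b < 9 * a) && ok B (b :: t)

lemma ok_spec (B n : ℕ) (hB : n ≤ B) : ∀ (l : List ℕ) (a : ℕ), ok B (a :: l) = true → a < n →
    ∃ p ∈ a :: l, 8 * n < 9 * p ∧ p < n := by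
  intro l
  induction l with
  | nil =>
    intro a h ha
    simp only [ok, decide_eq_true_eq] at h
    exact ⟨a, by simp, by omega, ha⟩
  | cons b t ih =>
    intro a h ha
    simp only [ok, Bool.and_eq_true, decide_eq_true_eq] at h
    rcases lt_or_ge b n with hb | hb
    · obtain ⟨p, hp, h1⟩ := ih b h.2 hb
      exact ⟨p, List.mem_cons_of_mem _ hp, h1⟩
    · exact ⟨a, by simp, by omega, ha⟩

lemma medium (n : ℕ) (h1 : 59 < n) (h2 : n ≤ 2 ^ 22) :
    ∃ p : ℕ, p.Prime ∧ 8 * n < 9 * p ∧ p < n := by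
  have hok : ok (2 ^ 22) chain = true := by decide +kernel
  obtain ⟨p, hp, h⟩ := ok_spec (2 ^ 22) n h2 _ _ hok h1
  exact ⟨p, chain_prime p hp, h⟩

lemma small (n : ℕ) (h0 : 30 ≤ n) (h1 : n ≤ 59) (h35 : n ≠ 35) (h36 : n ≠ 36) (h37 : n ≠ 37)
    (h53 : n ≠ 53) : ∃ p : ℕ, p.Prime ∧ 8 * n < 9 * p ∧ p < n := by
  rcases le_or_gt n 32 with h | h
  · exact ⟨29, by norm_num, by omega, by omega⟩
  rcases le_or_gt n 34 with h | h
  · exact ⟨31, by norm_num, by omega, by omega⟩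
  rcases le_or_gt n 41 with h | h
  · exact ⟨37, by norm_num, by omega, by omega⟩
  rcases le_or_gt n 46 with h | h
  · exact ⟨41, by norm_num, by omega, by omega⟩
  rcases le_or_gt n 48 with h | h
  · exact ⟨43, by norm_num, by omega, by omega⟩
  rcases le_or_gt n 52 with h | h
  · exact ⟨47, by norm_num, by omega, by omega⟩
  · exact ⟨53, by norm_num, by omega, by omega⟩

end EightNinths

/-- For every `n ≥ 30` with `n ∉ {35, 36, 37, 53}`, the open interval
`(8n/9, n)` contains a prime. -/
theorem exists_prime_in_eight_ninths (n : ℕ) (hn : 30 ≤ n)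
    (hn' : n ∉ ({35, 36, 37, 53} : Set ℕ)) :
    ∃ p : ℕ, p.Prime ∧ 8 * n < 9 * p ∧ p < n := by
  simp only [Set.mem_insert_iff, Set.mem_singleton_iff, not_or] at hn'
  obtain ⟨h35, h36, h37, h53⟩ := hn'
  rcases le_or_gt n 59 with h | h
  · exact EightNinths.small n hn h h35 h36 h37 h53
  rcases le_or_gt n (2 ^ 22) with h2 | h2
  · exact EightNinths.medium n h h2
  · exact EightNinths.large n h2.le
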